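/- arXiv:1208.5298 — 2 statements merged into one kernel-verified Lean document; each statement's English description precedes it below -/
import Mathlib

section
/- Every commutative ring R is either submaximal or a Hilbert ring (i.e., every G-ideal of R is maximal; equivalently, every prime ideal of R is an intersection of maximal ideals). -/
/-- A ring is submaximal if it has a maximal subring. -/
def Submaximal (R : Type*) [CommRing R] : Prop :=
  ∃ S : Subring R, S ≠ ⊤ ∧ ∀ T : Subring R, S < T → T = ⊤

theorem submax_of_gen {R : Type*} [CommRing R] (A : Subring R) (v : R) (hv : v ∉ A)
    (h : ∀ T : Subring R, A ≤ T → v ∈ T → T = ⊤) : Submaximal R := by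
  obtain ⟨m, hAm, hm⟩ := zorn_le_nonempty₀ {T : Subring R | A ≤ T ∧ v ∉ T} (by
    intro c hc hchain y hy
    refine ⟨sSup c, ⟨(hc hy).1.trans (le_sSup hy), ?_⟩, fun z hz => le_sSup hz⟩
    rw [Subring.mem_sSup_of_directedOn ⟨y, hy⟩ hchain.directedOn]
    rintro ⟨s, hs, hvs⟩
    exact (hc hs).2 hvs) A ⟨le_rfl, hv⟩
  refine ⟨m, ?_, ?_⟩
  · rintro rfl
    exact hm.prop.2 trivial
  · intro T hT
    refine h T (hAm.trans hT.le) ?_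
    by_contra hvT
    exact absurd (hm.le_of_ge ⟨hAm.trans hT.le, hvT⟩ hT.le) (not_le_of_gt hT)

theorem submax_of_surj {R S : Type*} [CommRing R] [CommRing S] (f : R →+* S)
    (hf : Function.Surjective f) (h : Submaximal S) : Submaximal R := by
  obtain ⟨A, hA, hmax⟩ := h
  obtain ⟨v, hv⟩ : ∃ v, v ∉ A := by
    by_contra! hh
    exact hA (eq_top_iff.2 fun x _ => hh x)
  refine ⟨A.comap f, ?_, ?_⟩
  · intro hh
    obtain ⟨r, rfl⟩ := hf v
    have : r ∈ A.comap f := by rw [hh]; trivial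
    exact hv this
  · intro T hT
    have hker : ∀ x, f x = 0 → x ∈ T := fun x hx => hT.le (by
      rw [Subring.mem_comap, hx]; exact A.zero_mem)
    have h1 : T.map f = ⊤ := by
      apply hmax
      refine lt_of_le_of_ne ?_ ?_
      · intro a ha
        obtain ⟨r, rfl⟩ := hf a
        exact ⟨r, hT.le ha, rfl⟩
      · intro hh
        apply hT.not_ge
        intro t ht
        rw [Subring.mem_comap, hh]
        exact ⟨t, ht, rfl⟩
    rw [eq_top_iff]
    intro x _
    have : f x ∈ T.map f := by rw [h1]; trivial
    obtain ⟨t, ht, htx⟩ := this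
    have h2 : x - t ∈ T := hker _ (by rw [map_sub, htx, sub_self])
    simpa using T.add_mem h2 ht

theorem submax_core {B D : Type*} [CommRing B] [IsDomain B] [UniqueFactorizationMonoid B]
    [CommRing D] [IsDomain D] [Algebra B D] [Algebra.IsAlgebraic B D]
    (hinj : Function.Injective (algebraMap B D)) (u : B) (hu : Prime u)
    (hunit : IsUnit (algebraMap B D u)) : Submaximal D := by
  obtain ⟨v, hv⟩ := hunit.exists_right_inv
  have hnd : ∀ {a b : B}, ¬ u ∣ a → ¬ u ∣ b → ¬ u ∣ a * b := fun ha hb h =>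
    (hu.dvd_or_dvd h).elim ha hb
  let A : Subring D :=
    { carrier := {d | ∃ b : B, ¬ u ∣ b ∧ IsIntegral B (algebraMap B D b * d)}
      mul_mem' := by
        rintro x y ⟨a, ha, hx⟩ ⟨b, hb, hy⟩
        refine ⟨a * b, hnd ha hb, ?_⟩
        have := hx.mul hy
        rw [map_mul]; convert this using 1; ring
      one_mem' := ⟨1, hu.not_dvd_one, by simpa using isIntegral_one⟩
      add_mem' := by
        rintro x y ⟨a, ha, hx⟩ ⟨b, hb, hy⟩
        refine ⟨a * b, hnd ha hb, ?_⟩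
        have := ((isIntegral_algebraMap (R := B) (A := D) (x := b)).mul hx).add
          ((isIntegral_algebraMap (R := B) (A := D) (x := a)).mul hy)
        rw [map_mul]; convert this using 1; ring
      zero_mem' := ⟨1, hu.not_dvd_one, by simpa using isIntegral_zero⟩
      neg_mem' := by
        rintro x ⟨a, ha, hx⟩
        exact ⟨a, ha, by simpa using hx.neg⟩ }
  refine submax_of_gen A v ?_ ?_
  · rintro ⟨b, hb, hint⟩
    have hp : (Ideal.span {u}).IsPrime := (Ideal.span_singleton_prime hu.ne_zero).2 hu
    have hinj' : Function.Injective (algebraMap B (integralClosure B D)) := by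
      intro a c hac
      apply hinj
      exact congrArg (algebraMap (integralClosure B D) D) hac
    obtain ⟨Q, hQ, hQu⟩ := Ideal.exists_ideal_over_prime_of_isIntegral_of_isDomain
      (S := integralClosure B D) (Ideal.span {u})
      (by rw [(RingHom.injective_iff_ker_eq_bot _).1 hinj']; exact bot_le)
    have h1 : algebraMap B (integralClosure B D) b
        = algebraMap B (integralClosure B D) u * ⟨_, hint⟩ := by
      apply Subtype.ext
      change algebraMap B D b = algebraMap B D u * (algebraMap B D b * v)
      rw [mul_left_comm, hv, mul_one]
    have h2 : u ∈ Q.comap (algebraMap B (integralClosure B D)) := by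
      rw [hQu]; exact Ideal.mem_span_singleton_self u
    have h3 : b ∈ Q.comap (algebraMap B (integralClosure B D)) := by
      rw [Ideal.mem_comap, h1]
      exact Q.mul_mem_right _ h2
    rw [hQu, Ideal.mem_span_singleton] at h3
    exact hb h3
  · intro T hAT hvT
    rw [eq_top_iff]
    intro d _
    obtain ⟨y, hy0, hy⟩ := (Algebra.IsAlgebraic.isAlgebraic (R := B) d).exists_integral_multiple
    obtain ⟨c, hc, hcu⟩ := (FiniteMultiplicity.of_prime_left hu hy0).exists_eq_pow_mul_and_not_dvd
    set n := multiplicity u y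
    have hm : algebraMap B D u ^ n * d ∈ A := by
      refine ⟨c, hcu, ?_⟩
      rw [Algebra.smul_def, hc, map_mul, map_pow] at hy
      convert hy using 1; ring
    have := T.mul_mem (T.pow_mem hvT n) (hAT hm)
    rwa [← mul_assoc, ← mul_pow, mul_comm v, hv, one_pow, one_mul] at this

theorem submax_transc {k D : Type*} [CommRing k] [IsDomain k] [UniqueFactorizationMonoid k]
    [CommRing D] [IsDomain D] [Algebra k D] (u : D) (hu : Transcendental k u)
    (hunit : IsUnit u) : Submaximal D := by
  obtain ⟨t, hst, ht⟩ := exists_isTranscendenceBasis_superset (R := k) (s := {u})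
    ((algebraicIndependent_singleton_iff (⟨u, rfl⟩ : ({u} : Set D))).2 hu)
  have halg := ht.isAlgebraic
  let e := ht.1.aevalEquiv
  have hufd : UniqueFactorizationMonoid (Algebra.adjoin k (Set.range ((↑) : t → D))) :=
    e.toMulEquiv.uniqueFactorizationMonoid inferInstance
  let i : t := ⟨u, hst rfl⟩
  have hp : Prime (e (MvPolynomial.X i)) := (MulEquiv.prime_iff e).2 (MvPolynomial.X_prime)
  have hu' : algebraMap (Algebra.adjoin k (Set.range ((↑) : t → D))) D (e (MvPolynomial.X i)) = u := by
    rw [ht.1.algebraMap_aevalEquiv]; simp [i]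
  exact submax_core Subtype.val_injective _ hp (by rw [hu']; exact hunit)

theorem exists_transc {k D : Type*} [CommRing k] [IsDomain k] [CommRing D] [IsDomain D]
    [Algebra k D] (x t : D) (hx : x ≠ 0) (ht : Transcendental k t) :
    ∃ y, Transcendental k (1 + x * y) := by
  by_cases hxa : IsAlgebraic k x
  · obtain ⟨r, hr, s, hs⟩ := hxa.exists_nonzero_dvd (mem_nonZeroDivisors_of_ne_zero hx)
    refine ⟨s * t, fun h => ht ?_⟩
    have h1 : IsAlgebraic k (r • t) := by
      have := h.sub (isAlgebraic_one (R := k))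
      rw [Algebra.smul_def, hs]
      convert this using 1; ring
    exact h1.of_smul (mem_nonZeroDivisors_of_ne_zero hr)
  · refine ⟨1, fun h => hxa ?_⟩
    have := h.sub (isAlgebraic_one (R := k))
    simpa using this

theorem submax_domain {D : Type*} [CommRing D] [IsDomain D] (x : D) (hx : x ≠ 0)
    (hJ : ∀ y, IsUnit (1 + x * y)) : Submaximal D := by
  obtain h0 | ⟨p, hp, hpD⟩ := CharP.exists' D
  · by_cases halg : Algebra.IsAlgebraic ℤ D
    · obtain ⟨r, hr, s, hs⟩ := (Algebra.IsAlgebraic.isAlgebraic (R := ℤ) x).exists_nonzero_dvd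
        (mem_nonZeroDivisors_of_ne_zero hx)
      have hr2 : (1 + r ^ 2).natAbs ≠ 1 := by
        have : 0 < r ^ 2 := by positivity
        omega
      obtain ⟨q, hq, hqd⟩ := Nat.exists_prime_and_dvd hr2
      have hqd' : (q : ℤ) ∣ 1 + r ^ 2 := Int.natCast_dvd.2 hqd
      refine submax_core (B := ℤ) (D := D) (algebraMap ℤ D).injective_int q
        (Nat.prime_iff_prime_int.1 hq) ?_
      refine isUnit_of_dvd_unit (map_dvd (algebraMap ℤ D) hqd') ?_
      have hE : algebraMap ℤ D (1 + r ^ 2) = 1 + x * (s * (x * s)) := by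
        rw [map_add, map_pow, hs, map_one]; ring
      rw [hE]
      exact hJ _
    · obtain ⟨t, ht⟩ : ∃ t : D, Transcendental ℤ t := by
        by_contra! hh
        exact halg ⟨fun t => not_not.1 (hh t)⟩
      obtain ⟨y, hy⟩ := exists_transc x t hx ht
      exact submax_transc _ hy (hJ y)
  · letI : Algebra (ZMod p) D := ZMod.algebra D p
    by_cases halg : Algebra.IsAlgebraic (ZMod p) D
    · obtain ⟨r, hr, s, hs⟩ := (Algebra.IsAlgebraic.isAlgebraic (R := ZMod p) x).exists_nonzero_dvd
        (mem_nonZeroDivisors_of_ne_zero hx)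
      have h1 : x * (s * algebraMap (ZMod p) D r⁻¹) = 1 := by
        rw [← mul_assoc, ← hs, ← map_mul, mul_inv_cancel₀ hr, map_one]
      have := hJ (-(s * algebraMap (ZMod p) D r⁻¹))
      rw [mul_neg, h1] at this
      simp at this
    · obtain ⟨t, ht⟩ : ∃ t : D, Transcendental (ZMod p) t := by
        by_contra! hh
        exact halg ⟨fun t => not_not.1 (hh t)⟩
      obtain ⟨y, hy⟩ := exists_transc x t hx ht
      exact submax_transc _ hy (hJ y)

theorem stmt13 {R : Type*} [CommRing R] [Nontrivial R] :
    Submaximal R ∨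
      ∀ P : Ideal R, P.IsPrime → P = sInf {M : Ideal R | M.IsMaximal ∧ P ≤ M} := by
  by_contra! hcon
  obtain ⟨hsub, P, hP, hne⟩ := hcon
  apply hsub
  have hle : P ≤ sInf {M : Ideal R | M.IsMaximal ∧ P ≤ M} := le_sInf fun M hM => hM.2
  obtain ⟨a, ha, haP⟩ := SetLike.exists_of_lt (lt_of_le_of_ne hle hne)
  refine submax_of_surj (Ideal.Quotient.mk P) Ideal.Quotient.mk_surjective ?_
  refine submax_domain (Ideal.Quotient.mk P a) (by rwa [Ne, Ideal.Quotient.eq_zero_iff_mem]) ?_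
  intro y
  by_contra hnu
  obtain ⟨M, hM, hyM⟩ := exists_max_ideal_of_mem_nonunits hnu
  have hmax : (M.comap (Ideal.Quotient.mk P)).IsMaximal :=
    Ideal.comap_isMaximal_of_surjective _ Ideal.Quotient.mk_surjective
  have hPM : P ≤ M.comap (Ideal.Quotient.mk P) := by
    intro z hz
    rw [Ideal.mem_comap, Ideal.Quotient.eq_zero_iff_mem.2 hz]
    exact M.zero_mem
  have haM : Ideal.Quotient.mk P a ∈ M := (Ideal.mem_sInf.1 ha) ⟨hmax, hPM⟩
  apply hM.ne_top
  rw [Ideal.eq_top_iff_one]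
  exact (Ideal.add_mem_iff_left _ (M.mul_mem_right y haM)).1 hyM
end

section
/- Every uncountable unique factorization domain has a maximal subring. -/
open Polynomial

theorem submaximal_of_adjoin {R : Type*} [CommRing R] (S : Subring R) (a : R) (ha : a ∉ S)
    (h : ∀ T : Subring R, S ≤ T → a ∈ T → T = ⊤) : Submaximal R := by
  obtain ⟨m, hm, hmax⟩ := zorn_le_nonempty₀ {T : Subring R | a ∉ T} (by
    intro c hc hch y hy
    refine ⟨sSup c, ?_, fun z hz => le_sSup hz⟩
    intro hmem
    obtain ⟨s, hs, has⟩ := (Subring.mem_sSup_of_directedOn ⟨y, hy⟩ hch.directedOn).1 hmem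
    exact hc hs has) S ha
  refine ⟨m, fun h' => hmax.prop (h' ▸ Subring.mem_top a), fun T hT => ?_⟩
  refine h T (hm.trans hT.le) ?_
  by_contra haT
  exact hT.not_ge (hmax.le_of_ge haT hT.le)

theorem Submaximal.of_surjective {R D : Type*} [CommRing R] [CommRing D] (φ : R →+* D)
    (hφ : Function.Surjective φ) (h : Submaximal D) : Submaximal R := by
  obtain ⟨S, hS, hmax⟩ := h
  refine ⟨S.comap φ, ?_, fun T hT => ?_⟩
  · intro h
    apply hS
    rw [eq_top_iff]
    intro d _
    obtain ⟨r, rfl⟩ := hφ d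
    have : r ∈ S.comap φ := h ▸ Subring.mem_top r
    exact this
  · have hker : ∀ r, φ r ∈ T.map φ → r ∈ T := by
      rintro r ⟨t, ht, hrt⟩
      have : r - t ∈ S.comap φ := by
        rw [Subring.mem_comap, map_sub, hrt, sub_self]; exact S.zero_mem
      simpa using T.add_mem (hT.le this) ht
    have h1 : T.map φ = ⊤ := by
      apply hmax
      refine lt_of_le_of_ne ?_ ?_
      · intro d hd
        obtain ⟨r, rfl⟩ := hφ d
        exact ⟨r, hT.le hd, rfl⟩
      · intro he
        apply hT.not_ge
        intro t ht
        rw [Subring.mem_comap, he]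
        exact ⟨t, ht, rfl⟩
    rw [eq_top_iff]
    intro r _
    exact hker r (h1 ▸ Subring.mem_top _)

/-- fractions `f(x)/g(x)` with `g(0) ≠ 0`. -/
def fracSubring {B K : Type*} [CommRing B] [IsDomain B] [Field K] [Algebra B K] (x : K) :
    Subring K where
  carrier := {z | ∃ f g : B[X], g.coeff 0 ≠ 0 ∧ z * aeval x g = aeval x f}
  mul_mem' := by
    rintro a b ⟨f, g, hg, h⟩ ⟨f', g', hg', h'⟩
    refine ⟨f * f', g * g', by simp [mul_coeff_zero, hg, hg'], ?_⟩
    rw [map_mul, map_mul, ← h, ← h']; ring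
  one_mem' := ⟨1, 1, by simp, by simp⟩
  add_mem' := by
    rintro a b ⟨f, g, hg, h⟩ ⟨f', g', hg', h'⟩
    refine ⟨f * g' + f' * g, g * g', by simp [mul_coeff_zero, hg, hg'], ?_⟩
    rw [map_mul, map_add, map_mul, map_mul, ← h, ← h']; ring
  zero_mem' := ⟨0, 1, by simp, by simp⟩
  neg_mem' := by
    rintro a ⟨f, g, hg, h⟩
    exact ⟨-f, g, hg, by rw [map_neg, ← h]; ring⟩

theorem exists_subring_field {A K : Type*} [CommRing A] [IsDomain A] [Field K] [Algebra A K]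
    (x : K) (hx : Transcendental A x) :
    ∃ V : Subring K, x⁻¹ ∉ V ∧ ∀ r, ∃ n : ℕ, x ^ n * r ∈ V := by
  obtain ⟨t, hxt, ht⟩ := exists_isTranscendenceBasis_superset (R := A) (s := {x})
    ((algebraicIndependent_singleton_iff (⟨x, rfl⟩ : ({x} : Set K))).2 hx)
  have halg := ht.isAlgebraic
  rw [Subtype.range_coe] at halg
  rw [Set.singleton_subset_iff] at hxt
  set B := Algebra.adjoin A (t \ {x}) with hB
  have hxB : Transcendental B x := by
    have := ht.1.transcendental_adjoin (s := {i : t | (i : K) ≠ x}) (i := ⟨x, hxt⟩) (by simp)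
    have e : (Subtype.val '' {i : t | (i : K) ≠ x}) = t \ {x} := by
      ext y; simp [and_comm]
    rwa [e] at this
  have hinj := transcendental_iff_injective.1 hxB
  have hx0 : x ≠ 0 := by
    rintro rfl
    exact hx isAlgebraic_zero
  let S : Subring K := fracSubring (B := B) x
  have hpS : ∀ f : B[X], aeval x f ∈ S := fun f => ⟨f, 1, by simp, by simp⟩
  have hCr : ∀ c ∈ Algebra.adjoin A t, ∃ f : B[X], aeval x f = c := by
    intro c hc
    have : Algebra.adjoin A t ≤ ((aeval x : B[X] →ₐ[B] K).range).restrictScalars A := by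
      apply Algebra.adjoin_le
      intro y hy
      by_cases hyx : y = x
      · exact ⟨X, by simp [hyx]⟩
      · exact ⟨C ⟨y, Algebra.subset_adjoin ⟨hy, hyx⟩⟩, by simp⟩
    exact this hc
  have hCS : ∀ c ∈ Algebra.adjoin A t, c ∈ S := by
    intro c hc
    obtain ⟨f, rfl⟩ := hCr c hc
    exact hpS f
  have hxS : x ∈ S := by simpa using hpS X
  refine ⟨(integralClosure S K).toSubring, ?_, ?_⟩
  · intro hmem
    have hmem : x⁻¹ ∈ integralClosure S K := hmem
    have hu : IsUnit (algebraMap S (integralClosure S K) ⟨x, hxS⟩) :=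
      IsUnit.of_mul_eq_one ⟨x⁻¹, hmem⟩ (by ext; exact mul_inv_cancel₀ hx0)
    have hu' : IsUnit (⟨x, hxS⟩ : S) :=
      isUnit_of_map_unit (algebraMap S (integralClosure S K)) _ hu
    obtain ⟨⟨w, f, g, hg, hw⟩, hw1⟩ := hu'.exists_right_inv
    have hw1 : x * w = 1 := congrArg Subtype.val hw1
    have : aeval x g = aeval x (X * f) := by
      rw [map_mul, aeval_X, ← hw, ← mul_assoc, hw1, one_mul]
    apply hg
    rw [hinj this]; simp
  · intro r
    obtain ⟨y, hy, hint⟩ := (Algebra.IsAlgebraic.isAlgebraic (R := Algebra.adjoin A t) r).exists_integral_multiple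
    obtain ⟨f, hf⟩ := hCr y y.2
    have hf0 : f ≠ 0 := by
      rintro rfl
      apply hy
      ext
      rw [← hf]; simp
    obtain ⟨u, hu, hu0⟩ := exists_eq_pow_rootMultiplicity_mul_and_not_dvd f hf0 0
    rw [C_0, sub_zero] at hu hu0
    rw [X_dvd_iff] at hu0
    have hux : aeval x u ≠ 0 := by
      intro h
      have : u = 0 := hinj (by simpa using h)
      simp [this] at hu0
    have hinv : (aeval x u)⁻¹ ∈ S := ⟨1, u, hu0, by simp [hux]⟩
    refine ⟨f.rootMultiplicity 0, ?_⟩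
    have h1 : IsIntegral S (y • r) :=
      hint.map_of_comp_eq (Subring.inclusion (S := (Algebra.adjoin A t).toSubring) (T := S) hCS)
        (RingHom.id K) rfl
    have h2 := h1.smul (⟨_, hinv⟩ : S)
    change IsIntegral S _
    convert h2 using 1
    change _ = (aeval x u)⁻¹ * ((y : K) * r)
    rw [← hf]
    have h3 : aeval x f = x ^ f.rootMultiplicity 0 * aeval x u := by
      conv_lhs => rw [hu]
      simp only [map_mul, map_pow, aeval_X]
    rw [h3]
    field_simp

theorem submaximal_of_transcendental_unit {A D : Type*} [CommRing A] [IsDomain A] [CommRing D]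
    [IsDomain D] [Algebra A D] (x y : D) (hxy : x * y = 1) (hx : Transcendental A x) :
    Submaximal D := by
  let K := FractionRing D
  have hinj : Function.Injective (algebraMap D K) := IsFractionRing.injective D K
  obtain ⟨V, hV, hr⟩ := exists_subring_field (A := A) (algebraMap D K x)
    ((transcendental_algebraMap_iff hinj).2 hx)
  have hxy' : algebraMap D K x * algebraMap D K y = 1 := by rw [← map_mul, hxy, map_one]
  refine submaximal_of_adjoin (V.comap (algebraMap D K)) y ?_ ?_
  · rwa [Subring.mem_comap, eq_inv_of_mul_eq_one_right hxy']
  · intro T hT hyT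
    rw [eq_top_iff]
    intro r _
    obtain ⟨n, hn⟩ := hr (algebraMap D K r)
    have h1 : x ^ n * r ∈ T := hT (by simpa using hn)
    have h2 := T.mul_mem (T.pow_mem hyT n) h1
    rwa [← mul_assoc, ← mul_pow, mul_comm y, hxy, one_pow, one_mul] at h2

theorem countable_divisors {R : Type*} [CommRing R] [IsDomain R] [UniqueFactorizationMonoid R]
    [Countable Rˣ] (a : R) (ha : a ≠ 0) : {d : R | d ∣ a}.Countable := by
  have := UniqueFactorizationMonoid.fintypeSubtypeDvd (Associates.mk a) (by simpa using ha)
  have hfin : {d : Associates R | d ∣ Associates.mk a}.Countable :=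
    (Set.finite_coe_iff.1 (Finite.of_fintype {d // d ∣ Associates.mk a})).countable
  refine ((hfin.biUnion (t := fun q _ => {d : R | Associates.mk d = q}) ?_)).mono ?_
  · intro q _
    obtain ⟨b, rfl⟩ := Associates.mk_surjective q
    refine (Set.countable_range (fun u : Rˣ => b * u)).mono ?_
    intro d hd
    obtain ⟨u, hu⟩ := (Associates.mk_eq_mk_iff_associated.1 hd).symm
    exact ⟨u, hu⟩
  · intro d hd
    simp only [Set.mem_iUnion]
    exact ⟨Associates.mk d, Associates.mk_dvd_mk.2 hd, rfl⟩

theorem stmt18 {R : Type*} [CommRing R] [IsDomain R] [UniqueFactorizationMonoid R]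
    (hR : ¬ Countable R) :
    Submaximal R := by
  let A := (⊥ : Subring R)
  have hA : Countable A := by
    have : ((⊥ : Subring R) : Set R).Countable := by
      rw [Subring.coe_bot]; exact Set.countable_range _
    exact this.to_subtype
  have halg := Algebraic.countable A R
  by_cases hunit : ∃ u : Rˣ, Transcendental A (u : R)
  · obtain ⟨u, hu⟩ := hunit
    exact submaximal_of_transcendental_unit (A := A) (u : R) _ u.mul_inv hu
  have hU : Countable Rˣ := by
    have := halg.to_subtype
    exact Function.Injective.countable
      (f := fun u : Rˣ => (⟨u, not_not.1 fun h => hunit ⟨u, h⟩⟩ : {x : R | IsAlgebraic A x}))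
      (fun u v h => Units.ext (congrArg Subtype.val h))
  obtain ⟨x, hx⟩ : ∃ x : R, Transcendental A x := by
    by_contra! h
    apply hR
    rw [← Set.countable_univ_iff]
    exact halg.mono fun x _ => not_not.1 (h x)
  have hinj := transcendental_iff_injective.1 hx
  have hx0 : x ≠ 0 := by
    rintro rfl
    exact hx isAlgebraic_zero
  have hAX : Countable A[X] := by
    rw [← Cardinal.mk_le_aleph0_iff]
    exact Polynomial.cardinalMk_le_max.trans (max_le (Cardinal.mk_le_aleph0_iff.2 hA) le_rfl)
  have hbad : (⋃ f : {f : A[X] // f ≠ 0}, {d : R | d ∣ aeval x f.1}).Countable := by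
    refine Set.countable_iUnion fun f => countable_divisors _ ?_
    exact fun h => f.2 (hinj (by simpa using h))
  obtain ⟨y, hy⟩ : ∃ y : R, x * y - 1 ∉ ⋃ f : {f : A[X] // f ≠ 0}, {d : R | d ∣ aeval x f.1} := by
    by_contra! h
    apply hR
    rw [← Set.countable_univ_iff]
    refine Set.MapsTo.countable_of_injOn (f := fun y => x * y - 1) (fun y _ => h y) ?_ hbad
    intro a _ b _ hab
    exact mul_left_cancel₀ hx0 (sub_left_injective hab)
  simp only [Set.mem_iUnion, not_exists, Set.mem_ofPred_eq, Subtype.forall] at hy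
  obtain ⟨P, hP, hle, hdis⟩ := Ideal.exists_le_prime_disjoint (Ideal.span {x * y - 1})
    ((nonZeroDivisors A[X]).map (aeval x : A[X] →ₐ[A] R)) (by
      rw [Set.disjoint_left]
      rintro _ h ⟨f, hf, rfl⟩
      exact hy f (nonZeroDivisors.ne_zero hf) (Ideal.mem_span_singleton.1 h))
  refine Submaximal.of_surjective (Ideal.Quotient.mk P) Ideal.Quotient.mk_surjective ?_
  refine submaximal_of_transcendental_unit (A := A) (Ideal.Quotient.mk P x)
    (Ideal.Quotient.mk P y) ?_ ?_
  · rw [← map_mul, ← map_one (Ideal.Quotient.mk P), Ideal.Quotient.eq]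
    exact hle (Ideal.mem_span_singleton_self _)
  · rintro ⟨f, hf, h0⟩
    have h1 : aeval (Ideal.Quotient.mk P x) f = Ideal.Quotient.mk P (aeval x f) :=
      aeval_algHom_apply (Ideal.Quotient.mkₐ A P) x f
    rw [h1, Ideal.Quotient.eq_zero_iff_mem] at h0
    exact Set.disjoint_left.1 hdis h0 ⟨f, mem_nonZeroDivisors_of_ne_zero hf, rfl⟩
end
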